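/- Let u|_q v and x|_p y be approximate exclusion atoms with |x| = |y| = n, u ≠ v and q ≤ p < 1/2. Then x|_p y is derivable from u|_q v using only the rules A3, A4, A5 and A7 if and only if S(u|_q v) ⊆ S(x|_p y). -/

import Mathlib

/-!
Since both sides of an atom have equal length, an atom `x|y` is the list of pairs `x.zip y`, and
the rules act on that list. Each rule keeps every pair that occurs, which gives soundness
(`ApprDeriv3457.sound`). Conversely, block exchange at the end of the list (A5) generates all
permutations (`PairDeriv.perm`), so A4 can delete any pair that occurs elsewhere in the list
(`PairDeriv.dedup`). Hence if `S(u|v) ⊆ S(x|y)`, append the pairs of `x|y` to those of `u|v` by A3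
and delete the now redundant pairs of `u|v` one at a time; A7 then raises `q` to `p`.
-/

/-- The set representation `S(x|y) = {⟨(x)_i, (y)_i⟩ : 1 ≤ i ≤ n}` of an
exclusion atom `x|y`. -/
def SRep {V : Type*} (x y : List V) : Set (V × V) := {q | q ∈ x.zip y}

/-- Derivability from the single approximate exclusion atom `u|_q v` using only
the rules A3, A4, A5 and A7 (the base case is the premise `u|_q v` itself). -/
inductive ApprDeriv3457 {V : Type*} (u v : List V) (q : ℝ) :
    List V → List V → ℝ → Prop where
  | base : ApprDeriv3457 u v q u v q
  | a3 {x y a b : List V} {p : ℝ} : ApprDeriv3457 u v q x y p → a.length = b.length →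
      ApprDeriv3457 u v q (x ++ a) (y ++ b) p
  | a4 {x y a b : List V} {p : ℝ} : x.length = y.length → a.length = b.length →
      ApprDeriv3457 u v q (x ++ a ++ a) (y ++ b ++ b) p →
      ApprDeriv3457 u v q (x ++ a) (y ++ b) p
  | a5 {x y z a b c : List V} {p : ℝ} : x.length = a.length → y.length = b.length →
      ApprDeriv3457 u v q (x ++ y ++ z) (a ++ b ++ c) p →
      ApprDeriv3457 u v q (x ++ z ++ y) (a ++ c ++ b) p
  | a7 {x y : List V} {p r : ℝ} : ApprDeriv3457 u v q x y r → r ≤ p → p ≤ 1 →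
      ApprDeriv3457 u v q x y p

/-- Derivability, at the premise's own level `q`, of the atom whose list of pairs is `l`. -/
def PairDeriv {V : Type*} (u v : List V) (q : ℝ) (l : List (V × V)) : Prop :=
  ApprDeriv3457 u v q (l.map Prod.fst) (l.map Prod.snd) q

namespace PairDeriv

variable {V : Type*} {u v : List V} {q : ℝ}

/-- A5 read on lists of pairs. -/
lemma exchange (k l m : List (V × V)) (h : PairDeriv u v q (k ++ l ++ m)) :
    PairDeriv u v q (k ++ m ++ l) := by
  unfold PairDeriv at *
  simp only [List.map_append] at *
  exact .a5 (by simp) (by simp) h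

/-- An adjacent transposition inside the list is three block exchanges: the two pairs are moved
to the end, swapped there, and moved back. The prefix `k` makes the induction on `List.Perm`
go through. -/
lemma perm_append {l m : List (V × V)} (hp : l.Perm m) :
    ∀ k, PairDeriv u v q (k ++ l) → PairDeriv u v q (k ++ m) := by
  induction hp with
  | nil => exact fun _ h => h
  | cons a _ ih =>
    intro k h
    simpa using ih (k ++ [a]) (by simpa using h)
  | swap a b l =>
    intro k h
    have h1 : PairDeriv u v q (k ++ l ++ [b, a]) := exchange k [b, a] l (by simpa using h)
    have h2 := exchange (k ++ l) [b] [a] (by simpa using h1)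
    simpa using exchange k l [a, b] (by simpa using h2)
  | trans _ _ ih1 ih2 => exact fun k h => ih2 k (ih1 k h)

lemma perm {l m : List (V × V)} (hp : l.Perm m) (h : PairDeriv u v q l) :
    PairDeriv u v q m :=
  perm_append hp [] h

/-- The pair `a` and its other occurrence are moved to the end, where A4 merges them. -/
lemma dedup {a : V × V} {l : List (V × V)} (ha : a ∈ l) (h : PairDeriv u v q (a :: l)) :
    PairDeriv u v q l := by
  obtain ⟨s, t, rfl⟩ := List.append_of_mem ha
  have hp : (s ++ a :: t).Perm ((s ++ t) ++ [a]) :=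
    List.perm_middle.trans (List.perm_append_singleton a (s ++ t)).symm
  have h1 : PairDeriv u v q ((s ++ t) ++ [a] ++ [a]) :=
    perm ((hp.cons a).trans (List.perm_append_singleton a _).symm) h
  refine perm hp.symm ?_
  unfold PairDeriv at *
  simp only [List.map_append] at h1 ⊢
  exact .a4 (by simp) (by simp) h1

lemma dedup_append (l m : List (V × V)) (hlm : l ⊆ m) (h : PairDeriv u v q (l ++ m)) :
    PairDeriv u v q m := by
  induction l with
  | nil => exact h
  | cons a l ih =>
    rw [List.cons_subset] at hlm
    exact ih hlm.2 (dedup (List.mem_append_right l hlm.1) h)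

end PairDeriv

lemma ApprDeriv3457.sound {V : Type*} {u v x y : List V} {q p : ℝ}
    (huv : u.length = v.length) (h : ApprDeriv3457 u v q x y p) :
    x.length = y.length ∧ SRep u v ⊆ SRep x y := by
  induction h with
  | base => exact ⟨huv, subset_rfl⟩
  | a3 _ hab ih =>
    refine ⟨by simp [ih.1, hab], fun r hr => ?_⟩
    have := ih.2 hr
    simp only [SRep, Set.mem_ofPred_eq] at this ⊢
    rw [List.zip_append ih.1]
    simp [this]
  | a4 hxy hab _ ih =>
    refine ⟨by simp [hxy, hab], fun r hr => ?_⟩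
    have := ih.2 hr
    simp only [SRep, Set.mem_ofPred_eq] at this ⊢
    rw [List.zip_append (by simp [hxy, hab]), List.zip_append hxy] at this
    rw [List.zip_append hxy]
    simpa [or_assoc] using this
  | a5 hxa hyb _ ih =>
    obtain ⟨hl, hs⟩ := ih
    -- The third blocks have equal length because the whole tuples do.
    simp only [List.length_append] at hl
    refine ⟨by simp only [List.length_append]; omega, fun r hr => ?_⟩
    have := hs hr
    simp only [SRep, Set.mem_ofPred_eq] at this ⊢
    rw [List.zip_append (by simp [hxa, hyb]), List.zip_append hxa] at this
    rw [List.zip_append (by simp only [List.length_append]; omega), List.zip_append hxa]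
    simp only [List.mem_append] at this ⊢
    tauto
  | a7 _ _ _ ih => exact ih

/-- For `u ≠ v` and `q ≤ p < 1/2`, `x|_p y` is derivable from
`u|_q v` using only rules A3, A4, A5, A7 iff `S(u|_q v) ⊆ S(x|_p y)`. -/
theorem apprDeriv3457_iff_srep_subset {V : Type*} (u v x y : List V) (q p : ℝ) (n : ℕ)
    (huv : u.length = v.length) (hx : x.length = n) (hy : y.length = n)
    (hne : u ≠ v) (h0 : 0 ≤ q) (hqp : q ≤ p) (hp : p < 1/2) :
    ApprDeriv3457 u v q x y p ↔ SRep u v ⊆ SRep x y := by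
  refine ⟨fun h => (h.sound huv).2, fun h => ?_⟩
  have hxy : x.length = y.length := hx.trans hy.symm
  have h1 : PairDeriv u v q (u.zip v ++ x.zip y) := by
    unfold PairDeriv
    simp only [List.map_append, List.map_fst_zip huv.le, List.map_snd_zip huv.ge,
      List.map_fst_zip hxy.le, List.map_snd_zip hxy.ge]
    exact .a3 .base hxy
  have h2 := PairDeriv.dedup_append _ _ (fun _ hr => h hr) h1
  unfold PairDeriv at h2
  rw [List.map_fst_zip hxy.le, List.map_snd_zip hxy.ge] at h2
  exact .a7 h2 hqp (by linarith)
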